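/- Assume n ≤ m and let i be an integer with 1 ≤ i ≤ 2N−1 and i ≠ N. If a₀,…,a_{m+n} and a′₀,…,a′_{m+n} are complex numbers with a₀ = a′₀ = 1 such that both ∑_{s=0}^{m+n} aₛ·z^{(m+n−s)N+i}·w^{Ns} and ∑_{s=0}^{m+n} a′ₛ·z^{(m+n−s)N+i}·w^{Ns} are quasi-invariant, then aₛ = a′ₛ for all s = 0,…,m+n; that is, the quasi-invariant of this form with leading coefficient 1 is unique. -/

import Mathlib

open MvPolynomial Finset

noncomputable section

/-- The polynomial ring `R = ℂ[z,w]`. -/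
abbrev R2 : Type := MvPolynomial (Fin 2) ℂ

/-- `z`, the first variable. -/
def zP : R2 := X 0

/-- `w`, the second variable (playing the role of `z̄`). -/
def wP : R2 := X 1

/-- `ε = exp(πi/N)`, a primitive `2N`-th root of unity. -/
def eps (N : ℕ) : ℂ := Complex.exp ((Real.pi : ℂ) * Complex.I / (N : ℂ))

/-- The reflection `σⱼ : z ↦ ε^j w, w ↦ ε^{-j} z` as a `ℂ`-algebra endomorphism. -/
def dihRefl (N j : ℕ) : R2 →ₐ[ℂ] R2 :=
  aeval (fun k : Fin 2 => if k = 0 then C (eps N ^ j) * X 1 else C (eps N ^ (-(j : ℤ))) * X 0)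

/-- The multiplicity `mⱼ`: `m` for even `j`, `n` for odd `j`. -/
def mult (m n j : ℕ) : ℕ := if Even j then m else n

/-- Quasi-invariance for the dihedral system `I₂(2N)` with multiplicities `(m,n)`. -/
def IsQuasiInv (N m n : ℕ) (p : R2) : Prop :=
  ∀ j < 2 * N, (zP - C (eps N ^ j) * wP) ^ (2 * mult m n j + 1) ∣ dihRefl N j p - p

/-!
Two solutions differ by a quasi-invariant with `a₀ = 0`, so it suffices to show that such a
quasi-invariant vanishes. Put `w = 1`: it becomes `Q = z ^ i * g(z ^ N)`, and its reflections become
scalar multiples of `K = f(z ^ N)`, where `f` has coefficients `a₀, …, a_{m+n}` and `g` has the same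
coefficients in reverse order. If `f ≠ 0`, then `N ∤ i` forces `K` and `Q` to have different
degrees, so their Wronskian is nonzero. Quasi-invariance makes it divisible by
`(z - ε ^ j) ^ (2 * mⱼ)` for every `j`, and it is divisible by `z ^ (i - 1)`; hence its degree is at
least `2 * N * (m + n) + i - 1`. On the other hand it is less than `deg K + deg Q`, which is at most
`N * (m + n) + (N * (m + n - 1) + i)` because `a₀ = 0`.
-/

section Wronskian

open scoped Polynomial
open Polynomial (wronskian)

variable {R : Type*} [CommRing R]

theorem pow_sub_one_dvd_wronskian_of_pow_dvd {p f : R[X]} {e : ℕ} (h : p ^ e ∣ f) (g : R[X]) :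
    p ^ (e - 1) ∣ wronskian f g := by
  have hf : p ^ (e - 1) ∣ f := (pow_dvd_pow p e.pred_le).trans h
  have hf' : p ^ (e - 1) ∣ f.derivative := Polynomial.pow_sub_one_dvd_derivative_of_pow_dvd h
  exact dvd_sub (hf.mul_right _) (hf'.mul_right _)

theorem wronskian_C_mul_sub_left (c : R) (f g : R[X]) :
    wronskian (Polynomial.C c * f - g) f = wronskian f g := by
  simp only [wronskian, Polynomial.derivative_sub, Polynomial.derivative_C_mul]
  ring

theorem pow_sub_one_dvd_wronskian_of_pow_dvd_C_mul_sub {p f g : R[X]} {e : ℕ} {c : R}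
    (h : p ^ e ∣ Polynomial.C c * f - g) : p ^ (e - 1) ∣ wronskian f g :=
  wronskian_C_mul_sub_left c f g ▸ pow_sub_one_dvd_wronskian_of_pow_dvd h f

theorem coeff_X_mul_derivative (p : R[X]) (d : ℕ) :
    (Polynomial.X * p.derivative).coeff d = d * p.coeff d := by
  cases d with
  | zero => simp
  | succ d => rw [Polynomial.coeff_X_mul, Polynomial.coeff_derivative, mul_comm, Nat.cast_succ]

theorem natDegree_X_mul_derivative_le (p : R[X]) :
    (Polynomial.X * p.derivative).natDegree ≤ p.natDegree := by
  refine Polynomial.natDegree_le_iff_coeff_eq_zero.2 fun d hd => ?_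
  rw [coeff_X_mul_derivative, Polynomial.coeff_eq_zero_of_natDegree_lt hd, mul_zero]

theorem coeff_X_mul_wronskian_natDegree_add (f g : R[X]) :
    (Polynomial.X * wronskian f g).coeff (f.natDegree + g.natDegree) =
      (g.natDegree - f.natDegree) * (f.leadingCoeff * g.leadingCoeff) := by
  have hX : Polynomial.X * wronskian f g =
      f * (Polynomial.X * g.derivative) - Polynomial.X * f.derivative * g := by
    rw [wronskian]
    ring
  rw [hX, Polynomial.coeff_sub,
    Polynomial.coeff_mul_add_eq_of_natDegree_le le_rfl (natDegree_X_mul_derivative_le g),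
    Polynomial.coeff_mul_add_eq_of_natDegree_le (natDegree_X_mul_derivative_le f) le_rfl,
    coeff_X_mul_derivative, coeff_X_mul_derivative, Polynomial.leadingCoeff,
    Polynomial.leadingCoeff]
  ring

theorem wronskian_ne_zero_of_natDegree_ne [NoZeroDivisors R] [CharZero R] {f g : R[X]}
    (hf : f ≠ 0) (hg : g ≠ 0) (hfg : f.natDegree ≠ g.natDegree) : wronskian f g ≠ 0 := by
  intro hW
  have hcoeff := coeff_X_mul_wronskian_natDegree_add f g
  rw [hW, mul_zero, Polynomial.coeff_zero] at hcoeff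
  have hdeg : (g.natDegree - f.natDegree : R) ≠ 0 :=
    sub_ne_zero.2 (Nat.cast_injective.ne hfg.symm)
  exact mul_ne_zero hdeg (mul_ne_zero (Polynomial.leadingCoeff_ne_zero.2 hf)
    (Polynomial.leadingCoeff_ne_zero.2 hg)) hcoeff.symm

theorem wronskian_expand_X_pow_mul_expand_ne_zero [IsDomain R] [CharZero R] {N i : ℕ}
    (hN : N ≠ 0) (hNi : ¬N ∣ i) {f g : R[X]} (hf : f ≠ 0) (hg : g ≠ 0) :
    wronskian (Polynomial.expand R N f) (Polynomial.X ^ i * Polynomial.expand R N g) ≠ 0 := by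
  have hf' : Polynomial.expand R N f ≠ 0 := (Polynomial.expand_ne_zero hN.pos).2 hf
  have hg' : Polynomial.expand R N g ≠ 0 := (Polynomial.expand_ne_zero hN.pos).2 hg
  refine wronskian_ne_zero_of_natDegree_ne hf'
    (mul_ne_zero (pow_ne_zero i Polynomial.X_ne_zero) hg') fun hdeg => hNi ?_
  rw [Polynomial.natDegree_X_pow_mul i hg', Polynomial.natDegree_expand,
    Polynomial.natDegree_expand] at hdeg
  exact (Nat.dvd_add_right (dvd_mul_left N _)).1 (hdeg ▸ dvd_mul_left N _)

end Wronskian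

section Polynomials

open scoped Polynomial

theorem sum_rootMultiplicity_le_natDegree {R : Type*} [CommRing R] [IsDomain R] (p : R[X])
    (s : Finset R) : ∑ r ∈ s, p.rootMultiplicity r ≤ p.natDegree := by
  classical
  calc ∑ r ∈ s, p.rootMultiplicity r
      = ∑ r ∈ s, p.roots.count r := by simp only [Polynomial.count_roots]
    _ ≤ ∑ r ∈ s ∪ p.roots.toFinset, p.roots.count r := sum_le_sum_of_subset subset_union_left
    _ = p.roots.card := Multiset.sum_count_eq_card fun r hr =>
        mem_union_right _ (Multiset.mem_toFinset.2 hr)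
    _ ≤ p.natDegree := p.card_roots'

variable {R : Type*} [Semiring R]

/-- The polynomial of degree at most `M` whose coefficients are `b 0, …, b M`; the remaining terms
of the sequence `b` are discarded. Substituting `z ^ N` in it gives the one-variable form of the
reflections of `qForm`. -/
def coeffPoly (M : ℕ) (b : ℕ → R) : R[X] :=
  ∑ s ∈ range (M + 1), Polynomial.C (b s) * Polynomial.X ^ s

theorem coeff_coeffPoly {M d : ℕ} (hd : d ≤ M) (b : ℕ → R) : (coeffPoly M b).coeff d = b d := by
  simp [coeffPoly, Polynomial.coeff_X_pow, hd]

theorem natDegree_coeffPoly_le (M : ℕ) (b : ℕ → R) : (coeffPoly M b).natDegree ≤ M :=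
  Polynomial.natDegree_sum_le_of_forall_le _ _ fun _ hs =>
    (Polynomial.natDegree_C_mul_X_pow_le _ _).trans (mem_range_succ_iff.1 hs)

theorem natDegree_coeffPoly_lt {M : ℕ} (hM : M ≠ 0) {b : ℕ → R} (hb : b M = 0) :
    (coeffPoly M b).natDegree < M :=
  (Polynomial.natDegree_le_pred (natDegree_coeffPoly_le M b)
    ((coeff_coeffPoly le_rfl b).trans hb)).trans_lt (Nat.sub_one_lt hM)

theorem coeffPoly_ne_zero {M s : ℕ} (hs : s ≤ M) {b : ℕ → R} (hb : b s ≠ 0) :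
    coeffPoly M b ≠ 0 := by
  intro h
  rw [← coeff_coeffPoly hs b, h, Polynomial.coeff_zero] at hb
  exact hb rfl

end Polynomials

theorem isPrimitiveRoot_eps {N : ℕ} (hN : N ≠ 0) : IsPrimitiveRoot (eps N) (2 * N) := by
  convert Complex.isPrimitiveRoot_exp (2 * N) (mul_ne_zero two_ne_zero hN) using 1
  rw [eps, Nat.cast_mul, Nat.cast_two, mul_assoc, mul_div_mul_left _ _ two_ne_zero]

theorem sum_mult (m n N : ℕ) : ∑ j ∈ range (2 * N), mult m n j = N * (m + n) := by
  induction N with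
  | zero => simp
  | succ k ih =>
    rw [Nat.mul_succ, sum_range_succ, sum_range_succ, ih]
    simp only [mult, even_two_mul, Nat.not_even_two_mul_add_one, if_true, if_false]
    ring

theorem IsQuasiInv.sub {N m n : ℕ} {p q : R2} (hp : IsQuasiInv N m n p)
    (hq : IsQuasiInv N m n q) : IsQuasiInv N m n (p - q) := by
  intro j hj
  rw [map_sub, sub_sub_sub_comm]
  exact dvd_sub (hp j hj) (hq j hj)

/-- The form `∑ₛ bₛ z^{(M-s)N+i} w^{Ns}` with leading coefficient `b 0`, the shape of the
quasi-invariants under study. Only `b 0, …, b M` enter. -/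
def qForm (N M i : ℕ) (b : ℕ → ℂ) : R2 :=
  ∑ s ∈ range (M + 1), C (b s) * zP ^ ((M - s) * N + i) * wP ^ (N * s)

theorem qForm_sub (N M i : ℕ) (a b : ℕ → ℂ) :
    qForm N M i (a - b) = qForm N M i a - qForm N M i b := by
  simp only [qForm, Pi.sub_apply, C_sub, sub_mul, sum_sub_distrib]

theorem dihRefl_C (N j : ℕ) (c : ℂ) : dihRefl N j (C c) = C c :=
  (dihRefl N j).commutes c

theorem dihRefl_zP (N j : ℕ) : dihRefl N j zP = C (eps N ^ j) * wP := by
  simp [dihRefl, zP, wP]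

theorem dihRefl_wP (N j : ℕ) : dihRefl N j wP = C (eps N ^ j)⁻¹ * zP := by
  simp [dihRefl, zP, wP]

/-- Dehomogenisation `ℂ[z,w] → ℂ[z]`, setting `w = 1`. It turns divisibility by powers
of the mirrors `z - ε^j w` into root multiplicities at `ε^j`. -/
def dehom : R2 →ₐ[ℂ] Polynomial ℂ :=
  aeval ![Polynomial.X, 1]

theorem dehom_C (c : ℂ) : dehom (C c) = Polynomial.C c :=
  dehom.commutes c

theorem dehom_zP : dehom zP = Polynomial.X := by
  simp [dehom, zP]

theorem dehom_wP : dehom wP = 1 := by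
  simp [dehom, wP]

theorem dehom_qForm (N M i : ℕ) (b : ℕ → ℂ) :
    dehom (qForm N M i b) =
      Polynomial.X ^ i * Polynomial.expand ℂ N (coeffPoly M fun s => b (M - s)) := by
  rw [coeffPoly, ← sum_range_reflect, qForm, map_sum, map_sum, mul_sum]
  refine sum_congr rfl fun s hs => ?_
  simp only [Nat.add_sub_cancel, Nat.sub_sub_self (mem_range_succ_iff.1 hs), map_mul, map_pow,
    dehom_C, dehom_zP, dehom_wP, Polynomial.expand_C, Polynomial.expand_X, one_pow]
  ring

theorem pow_mul_inv_pow_eq_of_pow_two_mul_eq_one {G : Type*} [DivisionMonoid G] {u : G} {N M s : ℕ}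
    (hu : u ^ (2 * N) = 1) (hs : s ≤ M) (i : ℕ) :
    u ^ ((M - s) * N + i) * u⁻¹ ^ (N * s) = u ^ (M * N + i) := by
  have hinv : u⁻¹ ^ N = u ^ N := by
    rw [inv_pow]
    exact inv_eq_of_mul_eq_one_left (by rw [← pow_add, ← two_mul, hu])
  obtain ⟨t, rfl⟩ := Nat.exists_eq_add_of_le hs
  rw [pow_mul u⁻¹, hinv, ← pow_mul, ← pow_add, Nat.add_sub_cancel_left]
  ring_nf

theorem dehom_dihRefl_qForm {N : ℕ} (hN : N ≠ 0) (M i j : ℕ) (b : ℕ → ℂ) :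
    dehom (dihRefl N j (qForm N M i b)) =
      Polynomial.C ((eps N ^ j) ^ (M * N + i)) * Polynomial.expand ℂ N (coeffPoly M b) := by
  have hunit : (eps N ^ j) ^ (2 * N) = 1 := by
    rw [pow_right_comm, (isPrimitiveRoot_eps hN).pow_eq_one, one_pow]
  rw [qForm, coeffPoly, map_sum, map_sum, map_sum, mul_sum]
  refine sum_congr rfl fun s hs => ?_
  rw [← pow_mul_inv_pow_eq_of_pow_two_mul_eq_one hunit (mem_range_succ_iff.1 hs) i]
  simp only [map_mul, map_pow, dihRefl_C, dihRefl_zP, dihRefl_wP, dehom_C, dehom_zP,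
    dehom_wP, Polynomial.expand_C, Polynomial.expand_X, mul_pow]
  ring

theorem IsQuasiInv.pow_dvd_dehom {N m n : ℕ} {p : R2} (hp : IsQuasiInv N m n p) {j : ℕ}
    (hj : j < 2 * N) :
    (Polynomial.X - Polynomial.C (eps N ^ j)) ^ (2 * mult m n j + 1) ∣
      dehom (dihRefl N j p) - dehom p := by
  simpa only [map_pow, map_sub, map_mul, dehom_C, dehom_zP, dehom_wP, mul_one] using
    map_dvd dehom (hp j hj)

theorem le_natDegree_of_pow_two_mul_mult_dvd {N m n e : ℕ} (hN : N ≠ 0) {W : Polynomial ℂ}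
    (hW : W ≠ 0) (hzero : Polynomial.X ^ e ∣ W)
    (hroot : ∀ j < 2 * N, (Polynomial.X - Polynomial.C (eps N ^ j)) ^ (2 * mult m n j) ∣ W) :
    e + 2 * (N * (m + n)) ≤ W.natDegree := by
  have hinj : Set.InjOn (eps N ^ ·) (range (2 * N)) := fun j hj k hk =>
    (isPrimitiveRoot_eps hN).pow_inj (mem_range.1 hj) (mem_range.1 hk)
  have hnotMem : (0 : ℂ) ∉ (range (2 * N)).image (eps N ^ ·) := by
    simp [eps]
  calc e + 2 * (N * (m + n))
      = e + ∑ j ∈ range (2 * N), 2 * mult m n j := by rw [← mul_sum, sum_mult]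
    _ ≤ W.rootMultiplicity 0 + ∑ j ∈ range (2 * N), W.rootMultiplicity (eps N ^ j) := by
        gcongr with j hj
        · rw [Polynomial.le_rootMultiplicity_iff hW, Polynomial.C_0, sub_zero]
          exact hzero
        · exact (Polynomial.le_rootMultiplicity_iff hW).2 (hroot j (mem_range.1 hj))
    _ = ∑ r ∈ insert 0 ((range (2 * N)).image (eps N ^ ·)), W.rootMultiplicity r := by
        rw [sum_insert hnotMem, sum_image hinj]
    _ ≤ W.natDegree := sum_rootMultiplicity_le_natDegree W _

theorem IsQuasiInv.le_natDegree_wronskian {N m n i : ℕ} (hN : N ≠ 0) {p : R2}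
    (hp : IsQuasiInv N m n p) {K : Polynomial ℂ}
    (hK : ∀ j, ∃ c, dehom (dihRefl N j p) = Polynomial.C c * K) (hX : Polynomial.X ^ i ∣ dehom p)
    (hW : Polynomial.wronskian K (dehom p) ≠ 0) :
    i - 1 + 2 * (N * (m + n)) ≤ (Polynomial.wronskian K (dehom p)).natDegree := by
  refine le_natDegree_of_pow_two_mul_mult_dvd hN hW ?_ fun j hj => ?_
  · rw [← Polynomial.wronskian_neg_eq, dvd_neg]
    exact pow_sub_one_dvd_wronskian_of_pow_dvd hX K
  · obtain ⟨c, hc⟩ := hK j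
    have hdvd := hp.pow_dvd_dehom hj
    rw [hc] at hdvd
    simpa only [Nat.add_sub_cancel] using pow_sub_one_dvd_wronskian_of_pow_dvd_C_mul_sub hdvd

theorem IsQuasiInv.eq_zero_of_leading_eq_zero {N m n i : ℕ} (hN : N ≠ 0) (hNi : ¬N ∣ i)
    {b : ℕ → ℂ} (hb0 : b 0 = 0) (hb : IsQuasiInv N m n (qForm N (m + n) i b)) :
    ∀ s ≤ m + n, b s = 0 := by
  by_contra! ⟨s, hs, hbs⟩
  have hM : m + n ≠ 0 := by grind
  set f := coeffPoly (m + n) b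
  set g := coeffPoly (m + n) fun t => b (m + n - t)
  have hf : f ≠ 0 := coeffPoly_ne_zero hs hbs
  have hg : g ≠ 0 := coeffPoly_ne_zero (Nat.sub_le (m + n) s) (by rwa [Nat.sub_sub_self hs])
  have hfdeg : f.natDegree * N ≤ (m + n) * N :=
    Nat.mul_le_mul_right N (natDegree_coeffPoly_le _ _)
  have hgdeg : (g.natDegree + 1) * N ≤ (m + n) * N :=
    Nat.mul_le_mul_right N (natDegree_coeffPoly_lt hM (by rwa [Nat.sub_self]))
  have hQdeg : (dehom (qForm N (m + n) i b)).natDegree = g.natDegree * N + i := by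
    rw [dehom_qForm, Polynomial.natDegree_X_pow_mul i ((Polynomial.expand_ne_zero hN.pos).2 hg),
      Polynomial.natDegree_expand]
  have hXQ : Polynomial.X ^ i ∣ dehom (qForm N (m + n) i b) :=
    dehom_qForm N (m + n) i b ▸ dvd_mul_right _ _
  have hW := wronskian_expand_X_pow_mul_expand_ne_zero hN hNi hf hg
  rw [← dehom_qForm] at hW
  have hlower := hb.le_natDegree_wronskian hN
    (fun j => ⟨_, dehom_dihRefl_qForm hN (m + n) i j b⟩) hXQ hW
  have hupper := Polynomial.natDegree_wronskian_lt_add hW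
  rw [hQdeg, Polynomial.natDegree_expand] at hupper
  grind

theorem quasiInvariant_q1i_unique_general {N m n i : ℕ} (hN : N ≠ 0) (hNi : ¬N ∣ i)
    {a a' : ℕ → ℂ} (h0 : a 0 = a' 0) (ha : IsQuasiInv N m n (qForm N (m + n) i a))
    (ha' : IsQuasiInv N m n (qForm N (m + n) i a')) : ∀ s ≤ m + n, a s = a' s := by
  have hsub : IsQuasiInv N m n (qForm N (m + n) i (a - a')) := by
    rw [qForm_sub]
    exact ha.sub ha'
  exact fun s hs => sub_eq_zero.1 <|
    hsub.eq_zero_of_leading_eq_zero hN hNi (sub_eq_zero.2 h0) s hs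

theorem quasiInvariant_q1i_unique (N m n i : ℕ) (hN : 1 ≤ N) (hnm : n ≤ m)
    (hi1 : 1 ≤ i) (hi2 : i ≤ 2 * N - 1) (hiN : i ≠ N)
    (a a' : ℕ → ℂ) (ha0 : a 0 = 1) (ha'0 : a' 0 = 1)
    (ha : IsQuasiInv N m n
      (∑ s ∈ Finset.range (m + n + 1),
        C (a s) * zP ^ ((m + n - s) * N + i) * wP ^ (N * s)))
    (ha' : IsQuasiInv N m n
      (∑ s ∈ Finset.range (m + n + 1),
        C (a' s) * zP ^ ((m + n - s) * N + i) * wP ^ (N * s))) :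
    ∀ s ≤ m + n, a s = a' s := by
  have hNi : ¬N ∣ i := fun h =>
    hiN (Nat.eq_of_dvd_of_lt_two_mul (by omega) h (by omega))
  exact quasiInvariant_q1i_unique_general (by omega) hNi (ha0.trans ha'0.symm) ha ha'
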